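/- Let P be the Borel probability measure on ℝ with density f given by f(x) = 1/2 for x ∈ [0, 1/2] ∪ [1, 3/2], f(x) = 1 for x ∈ (1/2, 1), and f(x) = 0 otherwise. Then for every integer n ≥ 4, every optimal set α_n of n-means for P contains at least one point of the open interval (0, 1/2) and at least one point of the open interval (1/2, 3/4). -/

import Mathlib

open MeasureTheory Set

/-- Distortion error of a set `α` with respect to the measure `Q`. -/
noncomputable def distortion (Q : Measure ℝ) (α : Set ℝ) : ℝ :=
  ∫ x, sInf ((fun a => (x - a) ^ 2) '' α) ∂Q

/-- The `n`-th quantization error of the measure `Q`. -/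
noncomputable def quantErr (Q : Measure ℝ) (n : ℕ) : ℝ :=
  sInf { v : ℝ | ∃ α : Set ℝ, α.Finite ∧ α.Nonempty ∧ α.ncard ≤ n ∧ v = distortion Q α }

/-- `α` is an optimal set of `n`-means for `Q`. -/
def IsOptimal (Q : Measure ℝ) (n : ℕ) (α : Set ℝ) : Prop :=
  α.Finite ∧ 1 ≤ α.ncard ∧ α.ncard ≤ n ∧ distortion Q α = quantErr Q n

/-- The density of the mixed distribution `P = (1/2) P₁ + (1/2) P₂`. -/
noncomputable def f2 (x : ℝ) : ℝ :=
  if x ∈ Icc (0 : ℝ) (1 / 2) ∪ Icc (1 : ℝ) (3 / 2) then 1 / 2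
  else if x ∈ Ioo (1 / 2 : ℝ) 1 then 1
  else 0

/-- The mixed distribution `P = (1/2) P₁ + (1/2) P₂`. -/
noncomputable def P2 : Measure ℝ :=
  volume.withDensity fun x => ENNReal.ofReal (f2 x)

/-!
Replacing a point of an optimal set by another one cannot lower the distortion, so each point is
the `P2`-centroid of its Voronoi cell; the cells of neighbours `a < b` meet at `(a + b) / 2`. The
density is constant on `[0, 1/2]` and nonincreasing on `(1/2, ∞)`, so the centroid conditions make
the gaps between neighbours constant left of `1/2` and nondecreasing right of it. If the two
smallest points had `a + b ≥ 1`, the first gap would be at least `1/2`, hence also the next two,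
and four points would not fit in `(0, 3/2)`; so `a + b < 1` and `a < 1/2`. For the neighbours
`c ≤ 1/2 < d`, either `c` is the least point and `d = 3c < 3/4`, or `c` has a left neighbour `p`
with `c ≤ 3p`, and then the balance equation of the cell of `c` excludes `d ≥ 3/4`.
-/

open Metric Measure

section Consecutive

variable {X : Type*} [LinearOrder X] {s : Set X} {a b c : X}

/-- `a < b` are neighbours in `s`: both belong to `s`, with no point of `s` strictly between. -/
structure IsConsecutive (s : Set X) (a b : X) : Prop where
  left_mem : a ∈ s
  right_mem : b ∈ s
  lt : a < b
  le_or_ge : ∀ c ∈ s, c ≤ a ∨ b ≤ c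

namespace IsConsecutive

theorem le_left_of_lt (h : IsConsecutive s a b) (hc : c ∈ s) (hcb : c < b) : c ≤ a :=
  (h.le_or_ge c hc).resolve_right hcb.not_ge

theorem right_le_of_lt (h : IsConsecutive s a b) (hc : c ∈ s) (hac : a < c) : b ≤ c :=
  (h.le_or_ge c hc).resolve_left hac.not_ge

theorem right_unique (h : IsConsecutive s a b) (h' : IsConsecutive s a c) : b = c :=
  (h.right_le_of_lt h'.right_mem h'.lt).antisymm (h'.right_le_of_lt h.right_mem h.lt)

theorem ncard_inter_Iic_le (h : IsConsecutive s a b) :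
    (s ∩ Iic b).ncard ≤ (s ∩ Iic a).ncard + 1 := by
  have heq : s ∩ Iic b = insert b (s ∩ Iic a) := by
    ext x
    constructor
    · rintro ⟨hxs, hxb⟩
      exact (eq_or_lt_of_le hxb).imp id fun hlt => ⟨hxs, h.le_left_of_lt hxs hlt⟩
    · rintro (rfl | ⟨hxs, hxa⟩)
      · exact ⟨h.right_mem, le_rfl⟩
      · exact ⟨hxs, hxa.trans h.lt.le⟩
  exact heq ▸ ncard_insert_le b _

end IsConsecutive

theorem exists_isConsecutive_right (hs : s.Finite) (ha : a ∈ s) (hb : b ∈ s) (hab : a < b) :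
    ∃ c, IsConsecutive s a c := by
  obtain ⟨c, hc⟩ := (hs.inter_of_left (Ioi a)).exists_minimal ⟨b, hb, hab⟩
  have hc := minimal_iff_isLeast.1 hc
  exact ⟨c, ha, hc.1.1, hc.1.2, fun x hx => (le_or_gt x a).imp id fun hax => hc.2 ⟨hx, hax⟩⟩

theorem exists_isConsecutive_left (hs : s.Finite) (ha : a ∈ s) (hb : b ∈ s) (hab : a < b) :
    ∃ c, IsConsecutive s c b := by
  obtain ⟨c, hc⟩ := (hs.inter_of_left (Iio b)).exists_maximal ⟨a, ha, hab⟩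
  have hc := maximal_iff_isGreatest.1 hc
  exact ⟨c, hc.1.1, hb, hc.1.2, fun x hx => (lt_or_ge x b).imp (fun hxb => hc.2 ⟨hx, hxb⟩) id⟩

theorem exists_isConsecutive_right_of_ncard_lt (hs : s.Finite) (ha : a ∈ s)
    (hcard : (s ∩ Iic a).ncard < s.ncard) : ∃ b, IsConsecutive s a b := by
  obtain ⟨b, hb, hba⟩ :=
    exists_mem_notMem_of_ncard_lt_ncard hcard (hs.inter_of_left (Iic a))
  exact exists_isConsecutive_right hs ha hb (not_le.1 fun hle => hba ⟨hb, hle⟩)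

theorem ncard_inter_Iic_of_isLeast (ha : IsLeast s a) : (s ∩ Iic a).ncard = 1 := by
  have heq : s ∩ Iic a = {a} :=
    Subset.antisymm (fun x hx => hx.2.antisymm (ha.2 hx.1))
      (singleton_subset_iff.2 ⟨ha.1, le_rfl⟩)
  rw [heq, ncard_singleton]

end Consecutive

section VoronoiCell

/-- The Voronoi cell of `a` with respect to `α`: the points to which no point of `α` is closer
than `a`. -/
def voronoiCell {X : Type*} [PseudoMetricSpace X] (α : Set X) (a : X) : Set X :=
  {x | dist x a ≤ infDist x α}

section PseudoMetricSpace

variable {X : Type*} [PseudoMetricSpace X] {α β : Set X} {a x : X}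

theorem isClosed_voronoiCell : IsClosed (voronoiCell α a) :=
  isClosed_le (by fun_prop) (continuous_infDist_pt α)

theorem mem_voronoiCell_iff (hα : α.Nonempty) :
    x ∈ voronoiCell α a ↔ ∀ b ∈ α, dist x a ≤ dist x b :=
  le_infDist hα

theorem infDist_eq_dist_of_mem_voronoiCell (ha : a ∈ α) (hx : x ∈ voronoiCell α a) :
    infDist x α = dist x a :=
  (infDist_le_dist_of_mem ha).antisymm hx

theorem infDist_le_infDist_of_notMem_voronoiCell (hα : α.Nonempty) (hβ : α \ {a} ⊆ β)
    (hx : x ∉ voronoiCell α a) : infDist x β ≤ infDist x α := by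
  refine le_of_forall_gt fun r hr => ?_
  obtain ⟨b, hb, hxb⟩ := (infDist_lt_iff hα).1 (lt_min hr (not_le.1 hx))
  have hba : b ≠ a := by
    rintro rfl
    exact (lt_min_iff.1 hxb).2.false
  exact (infDist_le_dist_of_mem (hβ ⟨hb, hba⟩)).trans_lt (lt_min_iff.1 hxb).1

theorem infDist_insert_self_lt (hα : IsClosed α) (hne : α.Nonempty) (hx : x ∉ α) (β : Set X) :
    infDist x (insert x β) < infDist x α := by
  rw [infDist_zero_of_mem (mem_insert x β)]
  exact (hα.notMem_iff_infDist_pos hne).1 hx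

end PseudoMetricSpace

section Real

variable {α : Set ℝ} {a b p x : ℝ}

theorem dist_le_dist_iff_le_midpoint (hab : a < b) : dist x a ≤ dist x b ↔ x ≤ (a + b) / 2 := by
  rw [Real.dist_eq, Real.dist_eq, ← sq_le_sq]
  constructor <;> intro h <;> nlinarith

theorem dist_le_dist_iff_midpoint_le (hab : a < b) : dist x b ≤ dist x a ↔ (a + b) / 2 ≤ x := by
  rw [Real.dist_eq, Real.dist_eq, ← sq_le_sq]
  constructor <;> intro h <;> nlinarith

theorem IsConsecutive.forall_gt_dist_le_iff (h : IsConsecutive α a b) :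
    (∀ c ∈ α, a < c → dist x a ≤ dist x c) ↔ x ≤ (a + b) / 2 := by
  refine ⟨fun hx => (dist_le_dist_iff_le_midpoint h.lt).1 (hx b h.right_mem h.lt),
    fun hx c hc hac => (dist_le_dist_iff_le_midpoint hac).2 ?_⟩
  linarith [h.right_le_of_lt hc hac]

theorem IsConsecutive.forall_lt_dist_le_iff (h : IsConsecutive α p a) :
    (∀ c ∈ α, c < a → dist x a ≤ dist x c) ↔ (p + a) / 2 ≤ x := by
  refine ⟨fun hx => (dist_le_dist_iff_midpoint_le h.lt).1 (hx p h.left_mem h.lt),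
    fun hx c hc hca => (dist_le_dist_iff_midpoint_le hca).2 ?_⟩
  linarith [h.le_left_of_lt hc hca]

theorem mem_voronoiCell_iff_lt_gt (ha : a ∈ α) : x ∈ voronoiCell α a ↔
    (∀ c ∈ α, c < a → dist x a ≤ dist x c) ∧ ∀ c ∈ α, a < c → dist x a ≤ dist x c := by
  rw [mem_voronoiCell_iff ⟨a, ha⟩]
  refine ⟨fun h => ⟨fun c hc _ => h c hc, fun c hc _ => h c hc⟩, fun h c hc => ?_⟩
  rcases lt_trichotomy c a with hca | rfl | hac
  exacts [h.1 c hc hca, le_rfl, h.2 c hc hac]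

theorem voronoiCell_eq_Icc (hpa : IsConsecutive α p a) (hab : IsConsecutive α a b) :
    voronoiCell α a = Icc ((p + a) / 2) ((a + b) / 2) := by
  ext x
  rw [mem_voronoiCell_iff_lt_gt hab.left_mem, hpa.forall_lt_dist_le_iff,
    hab.forall_gt_dist_le_iff, mem_Icc]

theorem voronoiCell_eq_Iic (ha : IsLeast α a) (hab : IsConsecutive α a b) :
    voronoiCell α a = Iic ((a + b) / 2) := by
  ext x
  rw [mem_voronoiCell_iff_lt_gt ha.1, hab.forall_gt_dist_le_iff, mem_Iic]
  exact and_iff_right fun c hc hca => absurd (ha.2 hc) hca.not_ge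

theorem voronoiCell_eq_Ici (ha : IsGreatest α a) (hpa : IsConsecutive α p a) :
    voronoiCell α a = Ici ((p + a) / 2) := by
  ext x
  rw [mem_voronoiCell_iff_lt_gt ha.1, hpa.forall_lt_dist_le_iff, mem_Ici]
  exact and_iff_left fun c hc hac => absurd (ha.2 hc) hac.not_ge

end Real

end VoronoiCell

section Centroid

/-- `a` is the centroid (conditional mean) of `Q` on `s`, in the balanced form that avoids dividing
by `Q s`. -/
def IsCentroid (Q : Measure ℝ) (s : Set ℝ) (a : ℝ) : Prop :=
  ∫ x in s, (x - a) ∂Q = 0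

variable {Q : Measure ℝ} {s t : Set ℝ} {a : ℝ}

theorem IsCentroid.congr_set (h : IsCentroid Q s a) (hst : s =ᵐ[Q] t) : IsCentroid Q t a :=
  (setIntegral_congr_set hst).symm.trans h

theorem measure_eq_zero_of_ae_restrict_eq [NullSingletonClass Q]
    (h : ∀ᵐ x ∂Q.restrict s, x = a) : Q s = 0 := by
  rw [← restrict_eq_zero, ← ae_eq_bot, ← Filter.eventually_false_iff_eq_bot]
  filter_upwards [h, ae_ne (Q.restrict s) a] with x hx hxa using hxa hx

variable [IsFiniteMeasure Q]

theorem integrable_sub_const (hQ : MemLp id 2 Q) (a : ℝ) : Integrable (fun x => x - a) Q :=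
  (hQ.integrable one_le_two).sub (integrable_const a)

theorem integrable_sub_const_sq (hQ : MemLp id 2 Q) (a : ℝ) :
    Integrable (fun x => (x - a) ^ 2) Q :=
  (hQ.sub (memLp_const a)).integrable_sq

theorem integral_sub_sub_sq (hQ : MemLp id 2 Q) (a t : ℝ) :
    ∫ x, (x - (a - t)) ^ 2 ∂Q =
      ∫ x, (x - a) ^ 2 ∂Q + (2 * t * ∫ x, (x - a) ∂Q + t ^ 2 * Q.real univ) := by
  have hlin : Integrable (fun x => 2 * t * (x - a)) Q := (integrable_sub_const hQ a).const_mul _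
  have haffine : Integrable (fun x => 2 * t * (x - a) + t ^ 2) Q := hlin.add (integrable_const _)
  have hexpand : ∀ x : ℝ, (x - (a - t)) ^ 2 = (x - a) ^ 2 + (2 * t * (x - a) + t ^ 2) :=
    fun x => by ring
  simp_rw [hexpand]
  rw [integral_add (integrable_sub_const_sq hQ a) haffine,
    integral_add hlin (integrable_const _), integral_const_mul, integral_const, smul_eq_mul,
    mul_comm (Q.real univ)]

theorem isCentroid_of_forall_setIntegral_le (hQ : MemLp id 2 Q)
    (hmin : ∀ c, ∫ x in s, (x - a) ^ 2 ∂Q ≤ ∫ x in s, (x - c) ^ 2 ∂Q) : IsCentroid Q s a := by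
  set I := ∫ x in s, (x - a) ∂Q
  have hquad : ∀ t : ℝ, 0 ≤ (Q.restrict s).real univ * (t * t) + 2 * I * t + 0 := fun t => by
    have := hmin (a - t)
    rw [integral_sub_sub_sq (hQ.restrict s)] at this
    linarith
  have hdiscrim := discrim_le_zero hquad
  have hI : I ^ 2 ≤ 0 := by
    rw [discrim] at hdiscrim
    linarith
  exact pow_eq_zero_iff two_ne_zero |>.1 (hI.antisymm (sq_nonneg I))

namespace IsCentroid

variable [NullSingletonClass Q]

theorem measure_eq_zero_of_ae_le (hQ : MemLp id 2 Q) (h : IsCentroid Q s a)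
    (hs : ∀ᵐ x ∂Q.restrict s, a ≤ x) : Q s = 0 := by
  have hint : Integrable (fun x => x - a) (Q.restrict s) := (integrable_sub_const hQ a).restrict
  have hzero := (integral_eq_zero_iff_of_nonneg_ae (hs.mono fun x => sub_nonneg.2) hint).1 h
  exact measure_eq_zero_of_ae_restrict_eq (hzero.mono fun x hx => sub_eq_zero.1 hx)

theorem measure_eq_zero_of_ae_ge (hQ : MemLp id 2 Q) (h : IsCentroid Q s a)
    (hs : ∀ᵐ x ∂Q.restrict s, x ≤ a) : Q s = 0 := by
  have hint : Integrable (fun x => x - a) (Q.restrict s) := (integrable_sub_const hQ a).restrict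
  have hzero := (integral_eq_zero_iff_of_nonneg_ae (f := fun x => -(x - a))
    (hs.mono fun x hx => neg_nonneg.2 (sub_nonpos.2 hx)) hint.neg).1
    ((integral_neg _).trans (neg_eq_zero.2 h))
  exact measure_eq_zero_of_ae_restrict_eq
    (hzero.mono fun x hx => sub_eq_zero.1 (neg_eq_zero.1 hx))

end IsCentroid

end Centroid

section Quantization

variable {Q : Measure ℝ} {n : ℕ} {α β : Set ℝ} {a c A B : ℝ}

theorem sInf_image_sub_sq_eq_infDist_sq (α : Set ℝ) (x : ℝ) :
    sInf ((fun a => (x - a) ^ 2) '' α) = infDist x α ^ 2 := by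
  rcases α.eq_empty_or_nonempty with rfl | hα
  · simp
  have hnonneg : ∀ r ∈ dist x '' α, 0 ≤ r := forall_mem_image.2 fun a _ => dist_nonneg
  have hmono : MonotoneOn (fun r : ℝ => r ^ 2) (dist x '' α) :=
    fun r hr _ _ hrs => pow_le_pow_left₀ (hnonneg r hr) hrs 2
  have hsq := hmono.map_csInf_of_continuousWithinAt (by fun_prop) (hα.image _) ⟨0, hnonneg⟩
  rw [infDist_eq_iInf, iInf, ← image_eq_range, hsq, image_image]
  simp only [Real.dist_eq, sq_abs]

theorem distortion_eq_integral_infDist_sq (Q : Measure ℝ) (α : Set ℝ) :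
    distortion Q α = ∫ x, infDist x α ^ 2 ∂Q := by
  simp only [distortion, sInf_image_sub_sq_eq_infDist_sq]

theorem distortion_nonneg (Q : Measure ℝ) (α : Set ℝ) : 0 ≤ distortion Q α := by
  rw [distortion_eq_integral_infDist_sq]
  exact integral_nonneg fun x => sq_nonneg _

theorem ncard_insert_sdiff_singleton_le {X : Type*} {s : Set X} {a : X} (hs : s.Finite)
    (ha : a ∈ s) (c : X) : (insert c (s \ {a})).ncard ≤ s.ncard :=
  (ncard_insert_le c _).trans_eq (ncard_sdiff_singleton_add_one ha hs)

theorem support_infinite_of_nullSingletonClass {X : Type*} [TopologicalSpace X]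
    [HereditarilyLindelofSpace X] [MeasurableSpace X] {μ : Measure X} [NullSingletonClass μ]
    (hμ : μ ≠ 0) : μ.support.Infinite := fun hfin =>
  hμ <| measure_univ_eq_zero.1 <| by
    rw [← union_compl_self μ.support]
    exact measure_union_null (hfin.measure_zero μ) measure_compl_support

namespace IsOptimal

theorem nonempty (hα : IsOptimal Q n α) : α.Nonempty :=
  nonempty_of_ncard_ne_zero (Nat.one_le_iff_ne_zero.1 hα.2.1)

theorem distortion_le (hα : IsOptimal Q n α) (hfin : β.Finite) (hne : β.Nonempty)
    (hcard : β.ncard ≤ n) : distortion Q α ≤ distortion Q β := by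
  rw [hα.2.2.2]
  refine csInf_le ⟨0, ?_⟩ ⟨β, hfin, hne, hcard, rfl⟩
  rintro _ ⟨γ, -, -, -, rfl⟩
  exact distortion_nonneg Q γ

theorem distortion_le_insert_sdiff (hα : IsOptimal Q n α) (ha : a ∈ α) (c : ℝ) :
    distortion Q α ≤ distortion Q (insert c (α \ {a})) :=
  hα.distortion_le (hα.1.sdiff.insert c) (insert_nonempty _ _)
    ((ncard_insert_sdiff_singleton_le hα.1 ha c).trans hα.2.2.1)

end IsOptimal

variable [IsFiniteMeasure Q]

theorem integrable_infDist_sq (hQ : MemLp id 2 Q) (α : Set ℝ) :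
    Integrable (fun x => infDist x α ^ 2) Q := by
  rcases α.eq_empty_or_nonempty with rfl | ⟨a, ha⟩
  · simp
  refine (hQ.sub (memLp_const a)).of_le (continuous_infDist_pt α).aestronglyMeasurable
    (ae_of_all _ fun x => ?_) |>.integrable_sq
  rw [Real.norm_of_nonneg infDist_nonneg]
  exact infDist_le_dist_of_mem ha

theorem distortion_lt_distortion (hQ : MemLp id 2 Q)
    (hle : ∀ᵐ x ∂Q, infDist x β ≤ infDist x α) (hc : c ∈ Q.support)
    (hlt : infDist c β < infDist c α) : distortion Q β < distortion Q α := by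
  have hint := (integrable_infDist_sq hQ α).sub (integrable_infDist_sq hQ β)
  have hopen : IsOpen {x | infDist x β < infDist x α} :=
    isOpen_lt (continuous_infDist_pt β) (continuous_infDist_pt α)
  have hpos : 0 < ∫ x, (infDist x α ^ 2 - infDist x β ^ 2) ∂Q := by
    refine (integral_pos_iff_support_of_nonneg_ae (hle.mono fun x hx => ?_) hint).2 ?_
    · exact sub_nonneg.2 (pow_le_pow_left₀ infDist_nonneg hx 2)
    · refine ((mem_support_iff_forall c).1 hc _ (hopen.mem_nhds hlt)).trans_le
        (measure_mono fun x hx => ?_)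
      exact (sub_pos.2 (pow_lt_pow_left₀ hx infDist_nonneg two_ne_zero)).ne'
  rw [integral_sub (integrable_infDist_sq hQ α) (integrable_infDist_sq hQ β)] at hpos
  rw [distortion_eq_integral_infDist_sq, distortion_eq_integral_infDist_sq]
  exact sub_pos.1 hpos

namespace IsOptimal

theorem ncard_eq (hα : IsOptimal Q n α) (hQ : MemLp id 2 Q) (hsupp : Q.support.Infinite) :
    α.ncard = n := by
  by_contra hne
  obtain ⟨c, hc, hcα⟩ := (hsupp.sdiff hα.1).nonempty
  refine (hα.distortion_le (hα.1.insert c) (insert_nonempty c α)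
    ((ncard_insert_le c α).trans (lt_of_le_of_ne hα.2.2.1 hne))).not_gt ?_
  exact distortion_lt_distortion hQ
    (ae_of_all _ fun x => infDist_le_infDist_of_subset (subset_insert c α) hα.nonempty) hc
    (infDist_insert_self_lt hα.1.isClosed hα.nonempty hcα α)

theorem measure_voronoiCell_ne_zero (hα : IsOptimal Q n α) (hQ : MemLp id 2 Q)
    (hsupp : Q.support.Infinite) (ha : a ∈ α) : Q (voronoiCell α a) ≠ 0 := fun hzero => by
  -- Moving a point with a null cell to a support point off `α` lowers the distortion.
  obtain ⟨c, hc, hcα⟩ := (hsupp.sdiff hα.1).nonempty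
  refine (hα.distortion_le_insert_sdiff ha c).not_gt (distortion_lt_distortion hQ ?_ hc
    (infDist_insert_self_lt hα.1.isClosed hα.nonempty hcα _))
  filter_upwards [measure_eq_zero_iff_ae_notMem.1 hzero] with x hx
  exact infDist_le_infDist_of_notMem_voronoiCell hα.nonempty (subset_insert c _) hx

theorem setIntegral_voronoiCell_le (hα : IsOptimal Q n α) (hQ : MemLp id 2 Q) (ha : a ∈ α)
    (c : ℝ) : ∫ x in voronoiCell α a, (x - a) ^ 2 ∂Q ≤ ∫ x in voronoiCell α a, (x - c) ^ 2 ∂Q := by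
  set S := voronoiCell α a
  set β := insert c (α \ {a})
  have hS : MeasurableSet S := isClosed_voronoiCell.measurableSet
  have hiα := integrable_infDist_sq hQ α
  have hiβ := integrable_infDist_sq hQ β
  have hdist := hα.distortion_le_insert_sdiff ha c
  rw [distortion_eq_integral_infDist_sq, distortion_eq_integral_infDist_sq,
    ← integral_add_compl hS hiα, ← integral_add_compl hS hiβ] at hdist
  have hcell_α : ∫ x in S, infDist x α ^ 2 ∂Q = ∫ x in S, (x - a) ^ 2 ∂Q :=
    setIntegral_congr_fun hS fun x hx => by
      simp only [infDist_eq_dist_of_mem_voronoiCell ha hx, Real.dist_eq, sq_abs]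
  have hcell_β : ∫ x in S, infDist x β ^ 2 ∂Q ≤ ∫ x in S, (x - c) ^ 2 ∂Q :=
    setIntegral_mono hiβ.integrableOn (integrable_sub_const_sq hQ c).integrableOn fun x => by
      simp only [← sq_abs (x - c), ← Real.dist_eq]
      exact pow_le_pow_left₀ infDist_nonneg (infDist_le_dist_of_mem (mem_insert c _)) 2
  have hcompl : ∫ x in Sᶜ, infDist x β ^ 2 ∂Q ≤ ∫ x in Sᶜ, infDist x α ^ 2 ∂Q :=
    setIntegral_mono_on hiβ.integrableOn hiα.integrableOn hS.compl fun x hx =>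
      pow_le_pow_left₀ infDist_nonneg (infDist_le_infDist_of_notMem_voronoiCell hα.nonempty
        (subset_insert c _) hx) 2
  linarith

theorem isCentroid_voronoiCell (hα : IsOptimal Q n α) (hQ : MemLp id 2 Q) (ha : a ∈ α) :
    IsCentroid Q (voronoiCell α a) a :=
  isCentroid_of_forall_setIntegral_le hQ (hα.setIntegral_voronoiCell_le hQ ha)

theorem subset_Ioo [NullSingletonClass Q] (hα : IsOptimal Q n α) (hQ : MemLp id 2 Q)
    (hQ0 : Q ≠ 0) (hAB : ∀ᵐ x ∂Q, x ∈ Icc A B) : α ⊆ Ioo A B := fun a ha => by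
  have hne := hα.measure_voronoiCell_ne_zero hQ (support_infinite_of_nullSingletonClass hQ0) ha
  have hcentroid := hα.isCentroid_voronoiCell hQ ha
  constructor <;> by_contra! hle
  · exact hne (hcentroid.measure_eq_zero_of_ae_le hQ
      (ae_restrict_of_ae (hAB.mono fun x hx => hle.trans hx.1)))
  · exact hne (hcentroid.measure_eq_zero_of_ae_ge hQ
      (ae_restrict_of_ae (hAB.mono fun x hx => hx.2.trans hle)))

end IsOptimal

end Quantization

section UniformOverlap

theorem P2_eq_smul_add_smul : P2 =
    (2⁻¹ : ENNReal) • volume.restrict (Icc (0 : ℝ) 1) +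
      (2⁻¹ : ENNReal) • volume.restrict (Icc (1 / 2 : ℝ) (3 / 2)) := by
  have hdensity : (fun x => ENNReal.ofReal (f2 x)) =ᵐ[volume]
      (Icc (0 : ℝ) 1).indicator (fun _ => 2⁻¹) +
        (Icc (1 / 2 : ℝ) (3 / 2)).indicator (fun _ => 2⁻¹) := by
    filter_upwards [ae_ne volume (1 / 2 : ℝ), ae_ne volume (1 : ℝ)] with x hhalf hone
    simp only [f2, Pi.add_apply, indicator_apply, mem_union, mem_Icc, mem_Ioo, one_div] at *
    split_ifs <;> first | grind | simp [ENNReal.inv_two_add_inv_two]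
  rw [P2, withDensity_congr_ae hdensity,
    withDensity_add_left (measurable_const.indicator measurableSet_Icc),
    withDensity_indicator measurableSet_Icc, withDensity_indicator measurableSet_Icc,
    withDensity_const, withDensity_const]

instance : IsFiniteMeasure P2 := by
  rw [P2_eq_smul_add_smul]
  have := Measure.smul_finite (volume.restrict (Icc (0 : ℝ) 1)) (c := 2⁻¹) (by simp)
  have := Measure.smul_finite (volume.restrict (Icc (1 / 2 : ℝ) (3 / 2))) (c := 2⁻¹) (by simp)
  infer_instance

instance : NullSingletonClass P2 :=
  inferInstanceAs (NullSingletonClass (volume.withDensity _))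

theorem P2_ne_zero : P2 ≠ 0 := fun h => by
  have huniv := congrArg (fun μ : Measure ℝ => μ univ) h
  norm_num [P2_eq_smul_add_smul] at huniv

theorem ae_P2_mem_Icc : ∀ᵐ x ∂P2, x ∈ Icc (0 : ℝ) (3 / 2) := by
  rw [P2_eq_smul_add_smul, ae_add_measure_iff]
  constructor <;> refine ae_smul_measure ?_ _ <;>
    filter_upwards [ae_restrict_mem measurableSet_Icc] with x hx <;>
    constructor <;> linarith [hx.1, hx.2]

theorem memLp_id_P2 : MemLp id 2 P2 :=
  memLp_of_bounded ae_P2_mem_Icc aestronglyMeasurable_id 2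

/-- The point of `[c, d]` nearest to `y`; used to write `[l, u] ∩ [c, d]`, up to a null set, as an
interval whose endpoints are in order even when the intersection is empty. -/
def clamp (c d y : ℝ) : ℝ := max c (min y d)

theorem Ioc_inter_Ioc_eq_Ioc_clamp {c d l u : ℝ} :
    Ioc l u ∩ Ioc c d = Ioc (clamp c d l) (clamp c d u) := by
  ext x
  simp only [clamp, mem_inter_iff, mem_Ioc]
  grind

theorem setIntegral_Icc_sub_restrict_Icc {c d l u : ℝ} (hlu : l ≤ u) (a : ℝ) :
    ∫ x in Icc l u, (x - a) ∂(volume.restrict (Icc c d)) =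
      (clamp c d u - clamp c d l) * (clamp c d l + clamp c d u - 2 * a) / 2 := by
  have hclamp : clamp c d l ≤ clamp c d u := max_le_max le_rfl (min_le_min hlu le_rfl)
  have hset : (Icc l u ∩ Icc c d : Set ℝ) =ᵐ[volume] Ioc (clamp c d l) (clamp c d u) := by
    rw [← Ioc_inter_Ioc_eq_Ioc_clamp]
    exact Ioc_ae_eq_Icc.symm.inter Ioc_ae_eq_Icc.symm
  rw [restrict_restrict measurableSet_Icc, setIntegral_congr_set hset,
    ← intervalIntegral.integral_of_le hclamp, intervalIntegral.integral_sub (by simp) (by simp),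
    integral_id, intervalIntegral.integral_const, smul_eq_mul]
  ring

theorem isCentroid_P2_Icc_iff {l u a : ℝ} (hl : 0 ≤ l) (hlu : l ≤ u) (hu : u ≤ 3 / 2) :
    IsCentroid P2 (Icc l u) a ↔
      (min u 1 - min l 1) * (min l 1 + min u 1 - 2 * a) +
        (max (1 / 2) u - max (1 / 2) l) * (max (1 / 2) l + max (1 / 2) u - 2 * a) = 0 := by
  have hint : ∀ c d : ℝ, Integrable (fun x => x - a)
      (((2⁻¹ : ENNReal) • volume.restrict (Icc c d)).restrict (Icc l u)) := fun c d =>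
    (Integrable.smul_measure ((by fun_prop : Continuous fun x : ℝ => x - a).integrableOn_Icc)
      (by simp)).restrict
  have hclamp_left : ∀ y, 0 ≤ y → clamp 0 1 y = min y 1 := fun y hy =>
    max_eq_right (le_min hy zero_le_one)
  have hclamp_right : ∀ y, y ≤ 3 / 2 → clamp (1 / 2) (3 / 2) y = max (1 / 2) y := fun y hy => by
    rw [clamp, min_eq_left hy]
  rw [IsCentroid, P2_eq_smul_add_smul, restrict_add, integral_add_measure (hint _ _) (hint _ _),
    restrict_smul, restrict_smul, integral_smul_measure, integral_smul_measure,
    setIntegral_Icc_sub_restrict_Icc hlu, setIntegral_Icc_sub_restrict_Icc hlu,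
    hclamp_left l hl, hclamp_left u (hl.trans hlu), hclamp_right l (hlu.trans hu),
    hclamp_right u hu]
  simp only [ENNReal.toReal_inv, ENNReal.toReal_ofNat, smul_eq_mul]
  constructor <;> intro h <;> linarith

end UniformOverlap

section Centroids

variable {l u a : ℝ}

theorem IsCentroid.two_mul_eq_of_le_half (h : IsCentroid P2 (Icc l u) a) (hl : 0 ≤ l)
    (hlu : l < u) (hu : u ≤ 1 / 2) : 2 * a = l + u := by
  rw [isCentroid_P2_Icc_iff hl hlu.le (by linarith), min_eq_left (by linarith),
    min_eq_left (by linarith), max_eq_left hu, max_eq_left (by linarith), sub_self, zero_mul,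
    add_zero] at h
  linarith [(mul_eq_zero.1 h).resolve_left (sub_pos.2 hlu).ne']

theorem IsCentroid.two_mul_le_of_half_le (h : IsCentroid P2 (Icc l u) a) (hl : 1 / 2 ≤ l)
    (hlu : l < u) (hu : u ≤ 3 / 2) : 2 * a ≤ l + u := by
  rw [isCentroid_P2_Icc_iff (by linarith) hlu.le hu, max_eq_right hl,
    max_eq_right (hl.trans hlu.le)] at h
  by_contra! hlt
  have hcore : (min u 1 - min l 1) * (min l 1 + min u 1 - 2 * a) ≤ 0 :=
    mul_nonpos_of_nonneg_of_nonpos (sub_nonneg.2 (min_le_min_right 1 hlu.le))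
      (by linarith [min_le_left l 1, min_le_left u 1])
  have htail : (u - l) * (l + u - 2 * a) < 0 :=
    mul_neg_of_pos_of_neg (sub_pos.2 hlu) (sub_neg.2 hlt)
  linarith

theorem IsCentroid.add_quarter_le (h : IsCentroid P2 (Icc 0 u) a) (hhalf : 1 / 2 ≤ u)
    (hu : u ≤ 3 / 2) : a + 1 / 4 ≤ u := by
  rw [isCentroid_P2_Icc_iff le_rfl (by linarith) hu, max_eq_right hhalf,
    max_eq_left (by norm_num), min_eq_left zero_le_one] at h
  rcases le_total u 1 with hu1 | hu1
  · rw [min_eq_left hu1] at h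
    nlinarith [sq_nonneg (u - 1 / 2)]
  · rw [min_eq_right hu1] at h
    nlinarith

theorem IsCentroid.half_lt (h : IsCentroid P2 (Icc l (3 / 2)) a) (hl : 0 ≤ l) (hla : l < a) :
    1 / 2 < a := by
  by_contra! ha
  rw [isCentroid_P2_Icc_iff hl (by linarith) le_rfl, min_eq_right (by norm_num),
    min_eq_left (by linarith), max_eq_right (by norm_num), max_eq_left (by linarith)] at h
  nlinarith

theorem IsCentroid.two_mul_sq_eq (h : IsCentroid P2 (Icc l u) a) (hl : 0 ≤ l) (hl' : l ≤ 1 / 2)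
    (hu : 1 / 2 ≤ u) (hu' : u ≤ 1) :
    2 * (u - a) ^ 2 = (a - l) ^ 2 + (1 / 2 - a) ^ 2 := by
  rw [isCentroid_P2_Icc_iff hl (by linarith) (by linarith), min_eq_left hu',
    min_eq_left (by linarith), max_eq_right hu, max_eq_left hl'] at h
  linarith

end Centroids

namespace IsOptimal

variable {n : ℕ} {α : Set ℝ} {p a b : ℝ}

theorem subset_Ioo_P2 (hα : IsOptimal P2 n α) : α ⊆ Ioo 0 (3 / 2) :=
  hα.subset_Ioo memLp_id_P2 P2_ne_zero ae_P2_mem_Icc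

theorem isCentroid_Icc (hα : IsOptimal P2 n α) (hpa : IsConsecutive α p a)
    (hab : IsConsecutive α a b) : IsCentroid P2 (Icc ((p + a) / 2) ((a + b) / 2)) a :=
  voronoiCell_eq_Icc hpa hab ▸ hα.isCentroid_voronoiCell memLp_id_P2 hab.left_mem

theorem isCentroid_Icc_zero (hα : IsOptimal P2 n α) (ha : IsLeast α a)
    (hab : IsConsecutive α a b) : IsCentroid P2 (Icc 0 ((a + b) / 2)) a := by
  have hcell := hα.isCentroid_voronoiCell memLp_id_P2 ha.1
  rw [voronoiCell_eq_Iic ha hab] at hcell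
  refine hcell.congr_set ?_
  filter_upwards [ae_P2_mem_Icc] with x hx
  exact propext (and_iff_right hx.1).symm

theorem isCentroid_Icc_three_halves (hα : IsOptimal P2 n α) (ha : IsGreatest α a)
    (hpa : IsConsecutive α p a) : IsCentroid P2 (Icc ((p + a) / 2) (3 / 2)) a := by
  have hcell := hα.isCentroid_voronoiCell memLp_id_P2 ha.1
  rw [voronoiCell_eq_Ici ha hpa] at hcell
  refine hcell.congr_set ?_
  filter_upwards [ae_P2_mem_Icc] with x hx
  exact propext (and_iff_left hx.2).symm

theorem eq_three_mul_of_isLeast (hα : IsOptimal P2 n α) (ha : IsLeast α a)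
    (hab : IsConsecutive α a b) (hsum : a + b ≤ 1) : b = 3 * a := by
  have ha0 := (hα.subset_Ioo_P2 ha.1).1
  linarith [(hα.isCentroid_Icc_zero ha hab).two_mul_eq_of_le_half le_rfl
    (by linarith [hab.lt]) (by linarith)]

theorem half_le_gap_of_isLeast (hα : IsOptimal P2 n α) (ha : IsLeast α a)
    (hab : IsConsecutive α a b) (hsum : 1 ≤ a + b) : 1 / 2 ≤ b - a := by
  have hb := (hα.subset_Ioo_P2 hab.right_mem).2
  linarith [(hα.isCentroid_Icc_zero ha hab).add_quarter_le (by linarith)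
    (by linarith [hab.lt])]

theorem half_lt_of_isGreatest (hα : IsOptimal P2 n α) (ha : IsGreatest α a)
    (hpa : IsConsecutive α p a) : 1 / 2 < a := by
  have hp := (hα.subset_Ioo_P2 hpa.left_mem).1
  exact (hα.isCentroid_Icc_three_halves ha hpa).half_lt (by linarith [hpa.lt])
    (by linarith [hpa.lt])

theorem gap_eq_gap_of_add_le_one (hα : IsOptimal P2 n α) (hpa : IsConsecutive α p a)
    (hab : IsConsecutive α a b) (hsum : a + b ≤ 1) : a - p = b - a := by
  have hp := (hα.subset_Ioo_P2 hpa.left_mem).1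
  linarith [(hα.isCentroid_Icc hpa hab).two_mul_eq_of_le_half (by linarith [hpa.lt])
    (by linarith [hpa.lt, hab.lt]) (by linarith)]

theorem gap_le_gap_of_one_le_add (hα : IsOptimal P2 n α) (hpa : IsConsecutive α p a)
    (hab : IsConsecutive α a b) (hsum : 1 ≤ p + a) : a - p ≤ b - a := by
  have hb := (hα.subset_Ioo_P2 hab.right_mem).2
  linarith [(hα.isCentroid_Icc hpa hab).two_mul_le_of_half_le (by linarith)
    (by linarith [hpa.lt, hab.lt]) (by linarith [hab.lt])]

theorem isLeast_or_exists_isConsecutive (hα : IsOptimal P2 n α) (ha : a ∈ α) :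
    IsLeast α a ∨ ∃ p, IsConsecutive α p a := by
  refine or_iff_not_imp_left.2 fun hleast => ?_
  obtain ⟨b, hb, hba⟩ : ∃ b ∈ α, b < a := by
    by_contra! h
    exact hleast ⟨ha, h⟩
  exact exists_isConsecutive_left hα.1 hb ha hba

theorem le_three_mul_of_le_half (hα : IsOptimal P2 n α) (hpa : IsConsecutive α p a)
    (ha : a ≤ 1 / 2) : a ≤ 3 * p := by
  have hsum : p + a ≤ 1 := by linarith [hpa.lt]
  rcases hα.isLeast_or_exists_isConsecutive hpa.left_mem with hp | ⟨q, hqp⟩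
  · exact (hα.eq_three_mul_of_isLeast hp hpa hsum).le
  · have hq := (hα.subset_Ioo_P2 hqp.left_mem).1
    linarith [hα.gap_eq_gap_of_add_le_one hqp hpa hsum, hqp.lt]

theorem exists_isLeast_add_lt_one (hα : IsOptimal P2 n α) (hn : 4 ≤ n) :
    ∃ a b, IsLeast α a ∧ IsConsecutive α a b ∧ a + b < 1 := by
  have hcard : α.ncard = n :=
    hα.ncard_eq memLp_id_P2 (support_infinite_of_nullSingletonClass P2_ne_zero)
  obtain ⟨a, ha⟩ := hα.1.exists_minimal hα.nonempty
  have ha := minimal_iff_isLeast.1 ha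
  have hcard_a := ncard_inter_Iic_of_isLeast ha
  obtain ⟨b, hab⟩ := exists_isConsecutive_right_of_ncard_lt hα.1 ha.1 (by omega)
  refine ⟨a, b, ha, hab, ?_⟩
  by_contra! hsum
  have hcard_b := hab.ncard_inter_Iic_le
  obtain ⟨c, hbc⟩ := exists_isConsecutive_right_of_ncard_lt hα.1 hab.right_mem (by omega)
  have hcard_c := hbc.ncard_inter_Iic_le
  obtain ⟨d, hcd⟩ := exists_isConsecutive_right_of_ncard_lt hα.1 hbc.right_mem (by omega)
  have hgap_ab := hα.half_le_gap_of_isLeast ha hab hsum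
  have hgap_bc := hα.gap_le_gap_of_one_le_add hab hbc hsum
  have hgap_cd := hα.gap_le_gap_of_one_le_add hbc hcd (by linarith [hab.lt, hbc.lt])
  linarith [(hα.subset_Ioo_P2 ha.1).1, (hα.subset_Ioo_P2 hcd.right_mem).2]

theorem exists_half_lt (hα : IsOptimal P2 n α) (hab : IsConsecutive α a b) :
    ∃ c ∈ α, 1 / 2 < c := by
  obtain ⟨c, hc⟩ := hα.1.exists_maximal hα.nonempty
  have hc := maximal_iff_isGreatest.1 hc
  obtain ⟨p, hpc⟩ := exists_isConsecutive_left hα.1 hab.left_mem hc.1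
    (hab.lt.trans_le (hc.2 hab.right_mem))
  exact ⟨c, hc.1, hα.half_lt_of_isGreatest hc hpc⟩

theorem exists_isConsecutive_le_half_lt (hα : IsOptimal P2 n α) (hab : IsConsecutive α a b)
    (ha : a ≤ 1 / 2) : ∃ c d, IsConsecutive α c d ∧ c ≤ 1 / 2 ∧ 1 / 2 < d := by
  obtain ⟨g, hg, hg_half⟩ := hα.exists_half_lt hab
  obtain ⟨c, hc⟩ := (hα.1.inter_of_left (Iic (1 / 2))).exists_maximal ⟨a, hab.left_mem, ha⟩
  have hc := maximal_iff_isGreatest.1 hc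
  obtain ⟨d, hcd⟩ := exists_isConsecutive_right hα.1 hc.1.1 hg (hc.1.2.trans_lt hg_half)
  refine ⟨c, d, hcd, hc.1.2, ?_⟩
  by_contra! hd
  exact hcd.lt.not_ge (hc.2 ⟨hcd.right_mem, hd⟩)

theorem lt_three_quarters_of_le_half (hα : IsOptimal P2 n α) (hpa : IsConsecutive α p a)
    (hab : IsConsecutive α a b) (ha : a ≤ 1 / 2) : b < 3 / 4 := by
  have hp := (hα.subset_Ioo_P2 hpa.left_mem).1
  have hb := (hα.subset_Ioo_P2 hab.right_mem).2
  have hpa3 := hα.le_three_mul_of_le_half hpa ha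
  by_contra! hb'
  rcases le_total (a + b) 1 with hsum | hsum
  · linarith [hα.gap_eq_gap_of_add_le_one hpa hab hsum]
  have hbalance := (hα.isCentroid_Icc hpa hab).two_mul_sq_eq (by linarith [hpa.lt])
    (by linarith [hpa.lt]) (by linarith) (by linarith)
  have hleft : (a - (p + a) / 2) ^ 2 ≤ (a / 3) ^ 2 :=
    pow_le_pow_left₀ (by linarith [hpa.lt]) (by linarith) 2
  have hright : (3 / 8 - a / 2) ^ 2 ≤ ((a + b) / 2 - a) ^ 2 :=
    pow_le_pow_left₀ (by linarith) (by linarith) 2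
  have hstrict : (a / 3) ^ 2 + (1 / 2 - a) ^ 2 < 2 * (3 / 8 - a / 2) ^ 2 := by
    nlinarith [hp.trans hpa.lt]
  linarith

end IsOptimal

theorem stmt_10 (n : ℕ) (hn : 4 ≤ n) (α : Set ℝ) (hα : IsOptimal P2 n α) :
    (∃ x ∈ α, x ∈ Ioo (0 : ℝ) (1 / 2)) ∧ (∃ x ∈ α, x ∈ Ioo (1 / 2 : ℝ) (3 / 4)) := by
  obtain ⟨a, b, ha, hab, hsum⟩ := hα.exists_isLeast_add_lt_one hn
  have ha_half : a < 1 / 2 := by linarith [hab.lt]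
  refine ⟨⟨a, ha.1, (hα.subset_Ioo_P2 ha.1).1, ha_half⟩, ?_⟩
  obtain ⟨c, d, hcd, hc, hd⟩ := hα.exists_isConsecutive_le_half_lt hab ha_half.le
  refine ⟨d, hcd.right_mem, hd, ?_⟩
  rcases hα.isLeast_or_exists_isConsecutive hcd.left_mem with hc_least | ⟨p, hpc⟩
  · obtain rfl : c = a := hc_least.unique ha
    obtain rfl : d = b := hcd.right_unique hab
    linarith [hα.eq_three_mul_of_isLeast ha hab hsum.le]
  · exact hα.lt_three_quarters_of_le_half hpc hcd hc
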